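/- Let K be a field with a discrete valuation val, valuation ring O_K, and uniformizer π. Let M ∈ M_n(O_K) be invertible over K with c = cond(M), and let E ∈ M_n(K) have all entries of valuation at least l, where l > c. Then M + E is invertible and every entry of (M + E)^{-1} − M^{-1} has valuation at least l − 2c. -/

import Mathlib

/-!
Write `c = a (n - 1)`. Since `P` and `Q` are invertible over the valuation ring, the Smith form
gives `M⁻¹ = Q⁻¹ Δ⁻¹ P⁻¹`, whose entries all have valuation at least `-c`. Hence `N = M⁻¹ E` has
entries of valuation at least `l - c ≥ 1`, so that `1 + N` is a perturbation of the identity.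

The key lemma `le_val_of_add_mulVec` says that `1 + N` cannot raise valuations: if the entries of
`v + N v` have valuation at least `b`, so do those of `v` (look at an entry of `v` of least
valuation). Taking `b = ⊤`, a vector killed by `M + E = M (1 + N)` must vanish, so `M + E` is
invertible. The difference `W = (M + E)⁻¹ - M⁻¹` satisfies `W + N W = -(N M⁻¹)`, whose right-hand
side has valuation at least `(l - c) - c`; the lemma applied to the columns of `W` concludes.
-/

/-- The diagonal matrix of a Smith normal form: diagonal entries
`π ^ a 0, …, π ^ a (s-1), 0, …, 0`. -/
def snfDiag {K : Type} [Field K] (π : K) (n m s : ℕ) (a : ℕ → ℤ) :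
    Matrix (Fin n) (Fin m) K :=
  fun i j => if (i : ℕ) = (j : ℕ) ∧ (i : ℕ) < s then π ^ a (i : ℕ) else 0

/-- Valuation bounds add up under matrix multiplication. -/
theorem le_val_matrix_mul {K : Type} [Field K] (val : AddValuation K (WithTop ℤ)) {n : ℕ}
    {A B : Matrix (Fin n) (Fin n) K} {b d : ℤ}
    (hA : ∀ i j, (b : WithTop ℤ) ≤ val (A i j)) (hB : ∀ i j, (d : WithTop ℤ) ≤ val (B i j)) :
    ∀ i j, ((b + d : ℤ) : WithTop ℤ) ≤ val ((A * B) i j) := by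
  intro i j
  rw [Matrix.mul_apply]
  refine val.map_le_sum fun k _ => ?_
  rw [val.map_mul, WithTop.coe_add]
  exact add_le_add (hA i k) (hB k j)

theorem val_det_nonneg {K : Type} [Field K] (val : AddValuation K (WithTop ℤ)) {n : ℕ}
    {A : Matrix (Fin n) (Fin n) K} (hA : ∀ i j, 0 ≤ val (A i j)) : 0 ≤ val A.det := by
  have h : A.det ∈ Valuation.integer (AddValuation.toValuation val) := by
    rw [Matrix.det_apply]
    refine Subring.sum_mem _ fun σ _ => ?_
    rw [Units.smul_def]
    exact Subring.zsmul_mem _ (Subring.prod_mem _ fun i _ => hA _ _) _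
  exact h

/-- An integral matrix whose determinant is a unit of the valuation ring has an integral
inverse. -/
theorem val_inv_nonneg {K : Type} [Field K] (val : AddValuation K (WithTop ℤ)) {n : ℕ}
    {A : Matrix (Fin n) (Fin n) K} (hA : ∀ i j, 0 ≤ val (A i j)) (hdet : val A.det = 0) :
    ∀ i j, 0 ≤ val (A⁻¹ i j) := by
  intro i j
  have h0 : A.det ≠ 0 := by
    intro h
    simp [h] at hdet
  have hinv : val (A.det)⁻¹ = 0 := by
    have h := val.map_mul A.det (A.det)⁻¹
    rw [mul_inv_cancel₀ h0, val.map_one, hdet, zero_add] at h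
    exact h.symm
  rw [Matrix.inv_def, Ring.inverse_eq_inv', Matrix.smul_apply, smul_eq_mul, val.map_mul, hinv,
    zero_add, Matrix.adjugate_apply]
  refine val_det_nonneg val fun k m => ?_
  rw [Matrix.updateRow_apply]
  split_ifs
  · by_cases h : m = i
    · simp [h]
    · simp [h]
  · exact hA k m

/-- If `N` has entries of positive valuation, then `1 + N` does not raise the least valuation of
the entries of a vector. -/
theorem le_val_of_add_mulVec {K : Type} [Field K] (val : AddValuation K (WithTop ℤ)) {n : ℕ}
    {N : Matrix (Fin n) (Fin n) K} (hN : ∀ i j, ((1 : ℤ) : WithTop ℤ) ≤ val (N i j))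
    {v : Fin n → K} {b : WithTop ℤ} (h : ∀ i, b ≤ val ((v + N.mulVec v) i)) :
    ∀ i, b ≤ val (v i) := by
  intro j
  have : Nonempty (Fin n) := ⟨j⟩
  obtain ⟨i, hi⟩ := Finite.exists_min fun i => val (v i)
  refine le_trans ?_ (hi j)
  by_contra! hlt
  have hNv : ((1 : ℤ) : WithTop ℤ) + val (v i) ≤ val (N.mulVec v i) := by
    rw [Matrix.mulVec_eq_sum, Finset.sum_apply]
    refine val.map_le_sum fun k _ => ?_
    rw [Pi.smul_apply, op_smul_eq_mul, Matrix.transpose_apply, val.map_mul]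
    exact add_le_add (hN i k) (hi k)
  have hlt' : val (v i) < ((1 : ℤ) : WithTop ℤ) + val (v i) := by
    obtain ⟨m, hm⟩ := WithTop.ne_top_iff_exists.1 hlt.ne_top
    rw [← hm, ← WithTop.coe_add, WithTop.coe_lt_coe]
    omega
  have hsub := val.map_sub ((v + N.mulVec v) i) (N.mulVec v i)
  rw [Pi.add_apply, add_sub_cancel_right] at hsub
  exact absurd hsub (not_le.2 (lt_min (hlt.trans_le (h i)) (hlt'.trans_le hNv)))

theorem snfDiag_eq_diagonal {K : Type} [Field K] (π : K) (n : ℕ) (a : ℕ → ℤ) :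
    snfDiag π n n n a = Matrix.diagonal fun i : Fin n => π ^ a i := by
  ext i j
  simp [snfDiag, Matrix.diagonal_apply, Fin.ext_iff]

theorem val_zpow_uniformizer {K : Type} [Field K] (val : AddValuation K (WithTop ℤ))
    {π : K} (hπ : val π = 1) (m : ℤ) : val (π ^ m) = (m : WithTop ℤ) := by
  have h0 : π ≠ 0 := by
    rintro rfl
    rw [val.map_zero] at hπ
    exact absurd hπ (by decide)
  have hnat (k : ℕ) : val (π ^ k) = ((k : ℤ) : WithTop ℤ) := by
    rw [val.map_pow, hπ]
    simp
  obtain ⟨k, rfl | rfl⟩ := m.eq_nat_or_neg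
  · rw [zpow_natCast, hnat]
  · have h := val.map_mul (π ^ k) (π ^ (-(k : ℤ)))
    rw [zpow_neg, zpow_natCast, mul_inv_cancel₀ (pow_ne_zero k h0), val.map_one, hnat] at h
    rw [zpow_neg, zpow_natCast]
    cases hx : val (π ^ k)⁻¹ with
    | top => simp [hx] at h
    | coe x =>
      rw [hx, ← WithTop.coe_add, ← WithTop.coe_zero, WithTop.coe_inj] at h
      rw [WithTop.coe_inj]
      omega

/-- Let `M ∈ M_n(O_K)` be invertible over `K`, with invariant factors
`a_1 ≤ ⋯ ≤ a_n` and `c = a_n = cond M`, and let `E ∈ M_n(K)` have all entries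
of valuation at least `l > c`.  Then `M + E` is invertible and every entry of
`(M + E)⁻¹ - M⁻¹` has valuation at least `l - 2c`. -/
theorem inv_perturbation_valuation {K : Type} [Field K]
    (val : AddValuation K (WithTop ℤ)) (hval : Function.Surjective val)
    (π : K) (hπ : val π = 1)
    {n : ℕ} (hn : 0 < n)
    (M P Q : Matrix (Fin n) (Fin n) K)
    (hMint : ∀ i j, 0 ≤ val (M i j))
    (hMinv : M.det ≠ 0)
    (hP : ∀ i j, 0 ≤ val (P i j)) (hPdet : val P.det = 0)
    (hQ : ∀ i j, 0 ≤ val (Q i j)) (hQdet : val Q.det = 0)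
    (a : ℕ → ℤ) (ha : ∀ i j : ℕ, i ≤ j → j < n → a i ≤ a j)
    (hM : M = P * snfDiag π n n n a * Q)
    (l : ℤ) (hl : a (n - 1) < l)
    (E : Matrix (Fin n) (Fin n) K)
    (hE : ∀ i j, ((l : ℤ) : WithTop ℤ) ≤ val (E i j)) :
    (M + E).det ≠ 0 ∧
      ∀ i j, ((l - 2 * a (n - 1) : ℤ) : WithTop ℤ) ≤
        val (((M + E)⁻¹ - M⁻¹) i j) := by
  have h0 : π ≠ 0 := by
    rintro rfl
    rw [val.map_zero] at hπ
    exact absurd hπ (by decide)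
  have hPu : IsUnit P.det := by
    refine isUnit_iff_ne_zero.2 fun h => ?_
    simp [h] at hPdet
  have hQu : IsUnit Q.det := by
    refine isUnit_iff_ne_zero.2 fun h => ?_
    simp [h] at hQdet
  have hMu : IsUnit M.det := isUnit_iff_ne_zero.2 hMinv
  set c := a (n - 1) with hc
  set D' : Matrix (Fin n) (Fin n) K := Matrix.diagonal fun i : Fin n => π ^ (-a i) with hD'
  have hMinv_eq : M⁻¹ = Q⁻¹ * D' * P⁻¹ := by
    have hDD : snfDiag π n n n a * D' = 1 := by
      rw [snfDiag_eq_diagonal, hD', Matrix.diagonal_mul_diagonal, ← Matrix.diagonal_one]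
      congr 1
      funext i
      rw [← zpow_add₀ h0, add_neg_cancel, zpow_zero]
    refine Matrix.inv_eq_right_inv ?_
    calc M * (Q⁻¹ * D' * P⁻¹)
        = P * (snfDiag π n n n a * ((Q * Q⁻¹) * D')) * P⁻¹ := by
          rw [hM]; simp only [Matrix.mul_assoc]
      _ = 1 := by
          rw [Matrix.mul_nonsing_inv Q hQu, Matrix.one_mul, hDD, Matrix.mul_one,
            Matrix.mul_nonsing_inv P hPu]
  have hD'val : ∀ i j, ((-c : ℤ) : WithTop ℤ) ≤ val (D' i j) := by
    intro i j
    rw [hD', Matrix.diagonal_apply]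
    split_ifs
    · rw [val_zpow_uniformizer val hπ, WithTop.coe_le_coe]
      have := ha i (n - 1) (by omega) (by omega)
      omega
    · simp
  have hMval : ∀ i j, ((-c : ℤ) : WithTop ℤ) ≤ val (M⁻¹ i j) := by
    have hPi : ∀ i j, ((0 : ℤ) : WithTop ℤ) ≤ val (P⁻¹ i j) := val_inv_nonneg val hP hPdet
    have hQi : ∀ i j, ((0 : ℤ) : WithTop ℤ) ≤ val (Q⁻¹ i j) := val_inv_nonneg val hQ hQdet
    have h := le_val_matrix_mul val (le_val_matrix_mul val hQi hD'val) hPi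
    rw [zero_add, add_zero] at h
    rwa [hMinv_eq]
  have hN := le_val_matrix_mul val hMval hE
  have hN1 : ∀ i j, ((1 : ℤ) : WithTop ℤ) ≤ val ((M⁻¹ * E) i j) := fun i j =>
    (WithTop.coe_le_coe.2 (by omega)).trans (hN i j)
  have hdet : (M + E).det ≠ 0 := by
    intro hzero
    obtain ⟨v, hv, hker⟩ := Matrix.exists_mulVec_eq_zero_iff.2 hzero
    have hvN : v + (M⁻¹ * E).mulVec v = 0 := by
      have h := congrArg (fun w => M⁻¹.mulVec w) hker
      rwa [Matrix.mulVec_mulVec, Matrix.mul_add, Matrix.nonsing_inv_mul M hMu, Matrix.add_mulVec,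
        Matrix.one_mulVec, Matrix.mulVec_zero] at h
    refine hv (funext fun i => ?_)
    have h := le_val_of_add_mulVec val hN1 (v := v) (b := ⊤) (fun i => by simp only [hvN]; simp) i
    exact val.top_iff.1 (top_le_iff.1 h)
  refine ⟨hdet, fun i j => ?_⟩
  set W := (M + E)⁻¹ - M⁻¹ with hW
  have hWeq : W + M⁻¹ * E * W = -(M⁻¹ * E * M⁻¹) := by
    have h1 : M⁻¹ * ((M + E) * (M + E)⁻¹) = M⁻¹ := by
      rw [Matrix.mul_nonsing_inv _ (isUnit_iff_ne_zero.2 hdet), Matrix.mul_one]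
    rw [← Matrix.mul_assoc, Matrix.mul_add, Matrix.nonsing_inv_mul M hMu, Matrix.add_mul,
      Matrix.one_mul] at h1
    rw [hW, Matrix.mul_sub, sub_add_sub_comm, h1]
    abel
  have hR := le_val_matrix_mul val hN hMval
  refine le_val_of_add_mulVec val hN1 (v := fun k => W k j) (fun k => ?_) i
  have hcol : ((fun k => W k j) + (M⁻¹ * E).mulVec fun k => W k j) k
      = -((M⁻¹ * E * M⁻¹) k j) := congrFun (congrFun hWeq k) j
  rw [hcol, val.map_neg]
  refine le_trans (WithTop.coe_le_coe.2 ?_) (hR k j)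
  omega
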